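/- Let p be a prime and X a compact, Hausdorff, totally disconnected topological space. Every ℤ_p-linear map μ from the ℤ_p-module of locally constant functions X → ℤ_p to ℤ_p extends uniquely to a continuous ℤ_p-linear map C(X, ℤ_p) → ℤ_p, where C(X, ℤ_p) carries the supremum metric. -/

import Mathlib

namespace PadicInt

variable {p : ℕ} [Fact p.Prime]

theorem toZModPow_eq_of_norm_sub_le {n : ℕ} {x y : ℤ_[p]}
    (h : ‖x - y‖ ≤ (p : ℝ) ^ (-n : ℤ)) : toZModPow n x = toZModPow n y := by
  rw [norm_le_pow_iff_mem_span_pow, ← ker_toZModPow, RingHom.mem_ker, map_sub] at h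
  exact sub_eq_zero.mp h

theorem isLocallyConstant_toZModPow (n : ℕ) :
    IsLocallyConstant (toZModPow n : ℤ_[p] → ZMod (p ^ n)) := by
  rw [IsLocallyConstant.iff_eventually_eq]
  intro x
  have hpos : (0 : ℝ) < (p : ℝ) ^ (-n : ℤ) :=
    zpow_pos (mod_cast (Fact.out : p.Prime).pos) _
  filter_upwards [Metric.ball_mem_nhds x hpos] with y hy
  exact toZModPow_eq_of_norm_sub_le (by rw [← dist_eq_norm]; exact (Metric.mem_ball.mp hy).le)

theorem norm_sub_val_toZModPow_le (n : ℕ) (x : ℤ_[p]) :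
    ‖x - ((toZModPow n x).val : ℤ_[p])‖ ≤ (p : ℝ) ^ (-n : ℤ) := by
  have : NeZero (p ^ n) := ⟨pow_ne_zero n (Fact.out : p.Prime).ne_zero⟩
  rw [norm_le_pow_iff_mem_span_pow, ← ker_toZModPow, RingHom.mem_ker, map_sub, map_natCast,
    ZMod.natCast_zmod_val, sub_self]

end PadicInt

namespace LocallyConstant

variable {p : ℕ} [Fact p.Prime] {X : Type*} [TopologicalSpace X]

theorem denseRange_toContinuousMap_padicInt [CompactSpace X] :
    DenseRange (toContinuousMap : LocallyConstant X ℤ_[p] → C(X, ℤ_[p])) := by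
  intro f
  rw [Metric.mem_closure_range_iff]
  intro ε hε
  obtain ⟨n, hn⟩ := PadicInt.exists_pow_neg_lt p hε
  refine ⟨⟨fun x ↦ ((PadicInt.toZModPow n (f x)).val : ℤ_[p]),
    ((PadicInt.isLocallyConstant_toZModPow n).comp_continuous f.continuous).comp
      fun a ↦ (a.val : ℤ_[p])⟩, ?_⟩
  rw [ContinuousMap.dist_lt_iff hε]
  intro x
  rw [dist_eq_norm]
  exact (PadicInt.norm_sub_val_toZModPow_le n (f x)).trans_lt hn

theorem exists_eq_pow_smul_of_norm_le {n : ℕ} {g : LocallyConstant X ℤ_[p]}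
    (hg : ∀ x, ‖g x‖ ≤ (p : ℝ) ^ (-n : ℤ)) :
    ∃ h : LocallyConstant X ℤ_[p], g = (p : ℤ_[p]) ^ n • h := by
  have hdiv (a : ℤ_[p]) : ∃ b, ‖a‖ ≤ (p : ℝ) ^ (-n : ℤ) → a = (p : ℤ_[p]) ^ n * b := by
    by_cases ha : ‖a‖ ≤ (p : ℝ) ^ (-n : ℤ)
    · obtain ⟨b, hb⟩ := Ideal.mem_span_singleton.mp
        ((PadicInt.norm_le_pow_iff_mem_span_pow a n).mp ha)
      exact ⟨b, fun _ ↦ hb⟩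
    · exact ⟨0, fun h ↦ absurd h ha⟩
  choose q hq using hdiv
  refine ⟨g.map q, ?_⟩
  ext1 x
  exact hq _ (hg x)

/-- Linear functionals on locally constant functions are non-expanding for the supremum norm. -/
theorem norm_linearMap_apply_le (μ : LocallyConstant X ℤ_[p] →ₗ[ℤ_[p]] ℤ_[p]) {n : ℕ}
    {g : LocallyConstant X ℤ_[p]} (hg : ∀ x, ‖g x‖ ≤ (p : ℝ) ^ (-n : ℤ)) :
    ‖μ g‖ ≤ (p : ℝ) ^ (-n : ℤ) := by
  obtain ⟨h, rfl⟩ := exists_eq_pow_smul_of_norm_le hg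
  rw [map_smul, PadicInt.norm_le_pow_iff_mem_span_pow, Ideal.mem_span_singleton, smul_eq_mul]
  exact dvd_mul_right _ _

theorem toContinuousMapLinearMap_injective :
    Function.Injective (toContinuousMapLinearMap ℤ_[p] : LocallyConstant X ℤ_[p] →ₗ[ℤ_[p]] _) :=
  fun _ _ h ↦ LocallyConstant.ext fun x ↦ DFunLike.congr_fun h x

variable [CompactSpace X]

/-- A linear functional on locally constant functions, viewed as a continuous linear functional
on their image in the space of continuous functions. -/
noncomputable def functionalOnRange (μ : LocallyConstant X ℤ_[p] →ₗ[ℤ_[p]] ℤ_[p]) :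
    LinearMap.range (toContinuousMapLinearMap ℤ_[p] :
      LocallyConstant X ℤ_[p] →ₗ[ℤ_[p]] C(X, ℤ_[p])) →L[ℤ_[p]] ℤ_[p] where
  toLinearMap := μ ∘ₗ
    (LinearEquiv.ofInjective _ (toContinuousMapLinearMap_injective (p := p) (X := X))).symm
  cont := by
    refine continuous_of_continuousAt_zero (μ ∘ₗ (LinearEquiv.ofInjective _
      (toContinuousMapLinearMap_injective (p := p) (X := X))).symm.toLinearMap) ?_
    rw [ContinuousAt, map_zero, Metric.tendsto_nhds]
    intro ε hε
    obtain ⟨n, hn⟩ := PadicInt.exists_pow_neg_lt p hε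
    have hpos : (0 : ℝ) < (p : ℝ) ^ (-n : ℤ) :=
      zpow_pos (mod_cast (Fact.out : p.Prime).pos) _
    filter_upwards [Metric.ball_mem_nhds _ hpos] with f hf
    obtain ⟨g, rfl⟩ := (LinearEquiv.ofInjective _
      (toContinuousMapLinearMap_injective (p := p) (X := X))).surjective f
    rw [mem_ball_zero_iff] at hf
    rw [dist_zero_right, LinearMap.comp_apply, LinearEquiv.coe_coe,
      LinearEquiv.symm_apply_apply]
    exact (norm_linearMap_apply_le μ fun x ↦
      (ContinuousMap.norm_coe_le_norm g.toContinuousMap x).trans hf.le).trans_lt hn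

theorem functionalOnRange_apply (μ : LocallyConstant X ℤ_[p] →ₗ[ℤ_[p]] ℤ_[p])
    (g : LocallyConstant X ℤ_[p]) :
    functionalOnRange μ ⟨g.toContinuousMap, g, rfl⟩ = μ g :=
  congrArg μ (LinearEquiv.symm_apply_apply (LinearEquiv.ofInjective _
    (toContinuousMapLinearMap_injective (p := p) (X := X))) g)

end LocallyConstant

/-- For a compact Hausdorff totally disconnected space `X`, every `ℤ_p`-linear
functional on the module of locally constant functions `X → ℤ_p` extends uniquely
to a continuous `ℤ_p`-linear functional on `C(X, ℤ_p)` (with the supremum metric,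
i.e. the compact-open topology). -/
theorem measure_extends (p : ℕ) [Fact p.Prime] (X : Type*) [TopologicalSpace X]
    [CompactSpace X] [T2Space X] [TotallyDisconnectedSpace X]
    (μ : LocallyConstant X ℤ_[p] →ₗ[ℤ_[p]] ℤ_[p]) :
    ∃! μ' : C(X, ℤ_[p]) →L[ℤ_[p]] ℤ_[p],
      ∀ g : LocallyConstant X ℤ_[p], μ' g.toContinuousMap = μ g := by
  let e := (LinearMap.range (LocallyConstant.toContinuousMapLinearMap ℤ_[p] :
    LocallyConstant X ℤ_[p] →ₗ[ℤ_[p]] C(X, ℤ_[p]))).subtypeL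
  have he : IsUniformInducing e := isUniformEmbedding_subtype_val.isUniformInducing
  have hdense : DenseRange e := by
    simpa [e] using! LocallyConstant.denseRange_toContinuousMap_padicInt (p := p) (X := X)
  refine ⟨(LocallyConstant.functionalOnRange μ).extend e, fun g ↦ ?_, fun ν hν ↦ ?_⟩
  · rw [← LocallyConstant.functionalOnRange_apply μ g]
    exact ContinuousLinearMap.extend_eq _ hdense he ⟨g.toContinuousMap, g, rfl⟩
  · refine (ContinuousLinearMap.extend_unique _ hdense he ν ?_).symm
    ext ⟨_, g, rfl⟩
    exact (hν g).trans (LocallyConstant.functionalOnRange_apply μ g).symm
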